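/- Define the rational functions of s ∈ ℂ: t(s) = 2s³(s²−5)/((s−2)²(s+3)³) and y(s) = s²(s−1)/(3(s−2)(s+3)). Then for every s ∈ ℂ such that s ≠ 2, s ≠ −3, t'(s) ≠ 0, t(s) ∉ {0,1}, and y(s) ∉ {0, 1, t(s)}, the pair (t, y) is a parametric solution of the sixth Painlevé equation PVI(α,β,γ,δ) at s with θ-tuple (θ₀, θ₁, θ_t, θ_∞) = (1/5, 2/5, 1/5, 2/5), i.e. α = 9/50, β = −1/50, γ = 2/25, δ = 12/25. -/

import Mathlib

noncomputable def tFun15 : ℂ → ℂ := fun s => 2*s^3*(s^2-5)/((s-2)^2*(s+3)^3)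

noncomputable def yFun15 : ℂ → ℂ := fun s => s^2*(s-1)/(3*(s-2)*(s+3))


lemma aux_dt (s : ℂ) (h1 : s - 2 ≠ 0) (h2 : s + 3 ≠ 0) :
    deriv tFun15 s = 10 * s^2 * (s+2) * (s-3)^2 / ((s-2)^3 * (s+3)^4) := by
  have hid := hasDerivAt_id' s
  have hn := (((hid.pow 3).const_mul 2).mul ((hid.pow 2).sub_const 5))
  have hd := (((hid.sub_const 2).pow 2).mul ((hid.add_const 3).pow 3))
  have h := hn.div hd (by simp [h1, h2])
  have h' : HasDerivAt tFun15 _ s := h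
  rw [h'.deriv]
  simp
  field_simp
  ring

lemma aux_dy (s : ℂ) (h1 : s - 2 ≠ 0) (h2 : s + 3 ≠ 0) :
    deriv yFun15 s = s * (s-3) * (s^2+5*s-4) / (3 * (s-2)^2 * (s+3)^2) := by
  have hid := hasDerivAt_id' s
  have hn := (hid.pow 2).mul (hid.sub_const 1)
  have hd := ((hid.sub_const 2).const_mul 3).mul (hid.add_const 3)
  have h := hn.div hd (by simp [h1, h2])
  have h' : HasDerivAt yFun15 _ s := h
  rw [h'.deriv]
  simp
  field_simp
  ring

lemma aux_p (s : ℂ) (h1 : s - 2 ≠ 0) (h2 : s + 3 ≠ 0) (h0 : s ≠ 0) (h3 : s + 2 ≠ 0)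
    (h4 : s - 3 ≠ 0) :
    deriv yFun15 s / deriv tFun15 s
      = (s^2+5*s-4) * ((s-2) * (s+3)^2) / (30 * s * ((s+2) * (s-3))) := by
  rw [aux_dt s h1 h2, aux_dy s h1 h2]
  field_simp
  ring

lemma aux_dp (s : ℂ) (h1 : s - 2 ≠ 0) (h2 : s + 3 ≠ 0) (h0 : s ≠ 0) (h3 : s + 2 ≠ 0)
    (h4 : s - 3 ≠ 0) :
    deriv (fun u => deriv yFun15 u / deriv tFun15 u) s
      = (((2*s+5) * ((s-2) * (s+3)^2) + (s^2+5*s-4) * ((s+3)^2 + 2*(s-2)*(s+3)))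
          * (s * ((s+2) * (s-3)))
        - (s^2+5*s-4) * ((s-2) * (s+3)^2) * (3*s^2-2*s-6)) / (30 * (s * ((s+2) * (s-3)))^2) := by
  have key : (fun u => deriv yFun15 u / deriv tFun15 u) =ᶠ[nhds s]
      (fun u => (u^2+5*u-4) * ((u-2) * (u+3)^2) / (30 * u * ((u+2) * (u-3)))) := by
    have e1 : ∀ᶠ u in nhds s, u - 2 ≠ 0 :=
      ContinuousAt.eventually_ne (by fun_prop) h1
    have e2 : ∀ᶠ u in nhds s, u + 3 ≠ 0 :=
      ContinuousAt.eventually_ne (by fun_prop) h2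
    have e3 : ∀ᶠ u in nhds s, u + 2 ≠ 0 :=
      ContinuousAt.eventually_ne (by fun_prop) h3
    have e4 : ∀ᶠ u in nhds s, u - 3 ≠ 0 :=
      ContinuousAt.eventually_ne (by fun_prop) h4
    have e0 : ∀ᶠ u in nhds s, u ≠ 0 := eventually_ne_nhds h0
    filter_upwards [e1, e2, e3, e4, e0] with u k1 k2 k3 k4 k0
    exact aux_p u k1 k2 k0 k3 k4
  rw [key.deriv_eq]
  have hid := hasDerivAt_id' s
  have hn := (((hid.pow 2).add (hid.const_mul 5)).sub_const 4).mul
    ((hid.sub_const 2).mul ((hid.add_const 3).pow 2))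
  have hd := (hid.const_mul 30).mul ((hid.add_const 2).mul (hid.sub_const 3))
  have h := hn.div hd (by simp [h0, h3, h4])
  have h' : HasDerivAt (fun u : ℂ => (u^2+5*u-4) * ((u-2) * (u+3)^2) /
    (30 * u * ((u+2) * (u-3)))) _ s := h
  rw [h'.deriv]
  simp
  field_simp
  ring

/-- Parametric algebraic solution of the sixth Painlevé equation. -/
theorem stmt_15 (s : ℂ)
    (h1 : s ≠ 2)
    (h2 : s ≠ -3)
    (hdt : deriv tFun15 s ≠ 0)
    (ht0 : tFun15 s ≠ 0) (ht1 : tFun15 s ≠ 1)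
    (hy0 : yFun15 s ≠ 0) (hy1 : yFun15 s ≠ 1) (hyt : yFun15 s ≠ tFun15 s) :
    deriv (fun u => deriv yFun15 u / deriv tFun15 u) s / deriv tFun15 s =
      (1/2) * (1/(yFun15 s) + 1/(yFun15 s - 1) + 1/(yFun15 s - tFun15 s)) *
          (deriv yFun15 s / deriv tFun15 s)^2
        - (1/(tFun15 s) + 1/(tFun15 s - 1) + 1/(yFun15 s - tFun15 s)) *
          (deriv yFun15 s / deriv tFun15 s)
        + (yFun15 s * (yFun15 s - 1) * (yFun15 s - tFun15 s) /
            ((tFun15 s)^2 * (tFun15 s - 1)^2)) *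
          ((9/50 : ℂ) + (-1/50 : ℂ) * tFun15 s / (yFun15 s)^2
            + (2/25 : ℂ) * (tFun15 s - 1) / (yFun15 s - 1)^2
            + (12/25 : ℂ) * tFun15 s * (tFun15 s - 1) / (yFun15 s - tFun15 s)^2) := by
  have k1 : s - 2 ≠ 0 := sub_ne_zero.mpr h1
  have k2 : s + 3 ≠ 0 := fun h => h2 (eq_neg_of_add_eq_zero_left h)
  have et : tFun15 s = 2*s^3*(s^2-5)/((s-2)^2*(s+3)^3) := rfl
  have ey : yFun15 s = s^2*(s-1)/(3*(s-2)*(s+3)) := rfl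
  have et1 : tFun15 s - 1 = (s+2)^2*(s-3)^3/((s-2)^2*(s+3)^3) := by
    rw [et]; field_simp; ring
  have ey1 : yFun15 s - 1 = (s+2)*(s-3)^2/(3*(s-2)*(s+3)) := by
    rw [ey]; field_simp; ring
  have eyt : yFun15 s - tFun15 s = s^2*(s+1)*(s+2)*(s-3)^2/(3*(s-2)^2*(s+3)^3) := by
    rw [ey, et]; field_simp; ring
  have k0 : s ≠ 0 := by rintro rfl; exact ht0 (by simp [et])
  have k5 : s^2 - 5 ≠ 0 := fun h => ht0 (by simp [et, h])
  have k6 : s - 1 ≠ 0 := fun h => hy0 (by simp [ey, h])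
  have k3 : s + 2 ≠ 0 := fun h => sub_ne_zero.mpr ht1 (by simp [et1, h])
  have k4 : s - 3 ≠ 0 := fun h => sub_ne_zero.mpr ht1 (by simp [et1, h])
  have k7 : s + 1 ≠ 0 := fun h => sub_ne_zero.mpr hyt (by simp [eyt, h])
  rw [aux_dp s k1 k2 k0 k3 k4, aux_p s k1 k2 k0 k3 k4, aux_dt s k1 k2, et1, ey1, eyt, et, ey]
  clear hdt ht0 ht1 hy0 hy1 hyt et ey et1 ey1 eyt
  field_simp
  ring
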